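/- arXiv:2508.08809 — 2 statements merged into one kernel-verified Lean document; each statement's English description precedes it below -/
import Mathlib

section
/- Let μ ∈ (0,1]. The function g_μ(ξ) = (tanh(√μ |ξ|)/(√μ |ξ|))^{1/2} (with g_μ(0) = 1) extends to a smooth function on ℝ, and for every n ∈ ℕ there is a constant C_n, independent of μ, such that |g_μ^{(n)}(ξ)| ≤ C_n μ^{n/2} ⟨√μ ξ⟩^{-1/2 - n} for all ξ ∈ ℝ, where g_μ^{(n)} denotes the n-th derivative. -/
noncomputable section

/-- The Japanese bracket `⟨x⟩ = (1 + x²)^{1/2}`. -/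
def jap (x : ℝ) : ℝ := (1 + x ^ 2) ^ ((1 : ℝ) / 2)

/-- The symbol `T_μ(ξ) = tanh(√μ |ξ|)/(√μ |ξ|)` for `ξ ≠ 0`, with value `1` at `ξ = 0`. -/
def Tsymb (μ ξ : ℝ) : ℝ :=
  if ξ = 0 then 1 else Real.tanh (Real.sqrt μ * |ξ|) / (Real.sqrt μ * |ξ|)

/-- `g_μ(ξ) = (tanh(√μ |ξ|)/(√μ |ξ|))^{1/2}`, with `g_μ(0) = 1`. -/
def gsymb (μ ξ : ℝ) : ℝ := Real.sqrt (Tsymb μ ξ)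

/-- The profile `G(t) = (tanh t / t)^{1/2}`. -/
def GG (t : ℝ) : ℝ := Real.sqrt (dslope Real.tanh 0 t)

/-- Holomorphic extension of the profile to the right half plane. -/
def HH (z : ℂ) : ℂ := Complex.tanh z ^ (((1 / 2 : ℝ)) : ℂ) * z ^ (((-(1 / 2) : ℝ)) : ℂ)

lemma tanh_an (x : ℝ) : AnalyticAt ℝ Real.tanh x := by
  have h : Real.tanh = fun y => Real.sinh y / Real.cosh y := by
    funext y; exact Real.tanh_eq_sinh_div_cosh y
  rw [h]
  exact Real.analyticAt_sinh.div Real.analyticAt_cosh (Real.cosh_pos x).ne'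

lemma tanh_hasDeriv0 : HasDerivAt Real.tanh 1 0 := by
  have h : Real.tanh = fun y => Real.sinh y / Real.cosh y := by
    funext y; exact Real.tanh_eq_sinh_div_cosh y
  rw [h]
  have := (Real.hasDerivAt_sinh 0).fun_div (Real.hasDerivAt_cosh 0) (Real.cosh_pos 0).ne'
  simpa using this

lemma ds_zero : dslope Real.tanh 0 0 = 1 := by
  rw [dslope_same]; exact tanh_hasDeriv0.deriv

lemma ds_ne {t : ℝ} (ht : t ≠ 0) : dslope Real.tanh 0 t = Real.tanh t / t := by
  rw [dslope_of_ne _ ht, slope_def_field]; simp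

lemma tanh_pos_aux {t : ℝ} (ht : 0 < t) : 0 < Real.tanh t := by
  rw [Real.tanh_eq_sinh_div_cosh]
  exact div_pos (Real.sinh_pos_iff.2 ht) (Real.cosh_pos t)

lemma ds_even (t : ℝ) : dslope Real.tanh 0 (-t) = dslope Real.tanh 0 t := by
  by_cases h : t = 0
  · simp [h]
  · rw [ds_ne h, ds_ne (neg_ne_zero.2 h), Real.tanh_neg, neg_div_neg_eq]

lemma ds_abs (t : ℝ) : dslope Real.tanh 0 |t| = dslope Real.tanh 0 t := by
  rcases abs_choice t with h | h <;> rw [h]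
  exact ds_even t

lemma ds_pos (t : ℝ) : 0 < dslope Real.tanh 0 t := by
  rw [← ds_abs]
  by_cases h : t = 0
  · simp [h, tanh_hasDeriv0.deriv]
  · have := abs_pos.2 h
    rw [ds_ne this.ne']
    exact div_pos (tanh_pos_aux this) this

lemma ds_an (t : ℝ) : AnalyticAt ℝ (dslope Real.tanh 0) t := by
  by_cases h : t = 0
  · subst h
    obtain ⟨p, hp⟩ := tanh_an 0
    exact hp.has_fpower_series_dslope_fslope.analyticAt
  · have h1 : AnalyticAt ℝ (fun y => Real.tanh y / y) t := (tanh_an t).fun_div analyticAt_id h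
    refine h1.congr ?_
    filter_upwards [isOpen_ne.mem_nhds h] with y hy
    exact (ds_ne hy).symm

lemma GG_smooth : ContDiff ℝ (⊤ : ℕ∞) GG := by
  rw [contDiff_iff_contDiffAt]
  intro t
  exact (ds_an t).contDiffAt.sqrt (ds_pos t).ne'

lemma GG_even (t : ℝ) : GG (-t) = GG t := by unfold GG; rw [ds_even]

lemma gsymb_eq {μ : ℝ} (hμ : 0 < μ) : gsymb μ = fun ξ => GG (Real.sqrt μ * ξ) := by
  funext ξ
  have hs := Real.sqrt_pos.2 hμ
  unfold gsymb GG Tsymb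
  split_ifs with h
  · simp [h, tanh_hasDeriv0.deriv]
  · rw [← ds_abs, abs_mul, abs_of_pos hs, ds_ne (mul_pos hs (abs_pos.2 h)).ne']

lemma sinh_parts (z : ℂ) : (Complex.sinh z).re = Real.sinh z.re * Real.cos z.im ∧
    (Complex.sinh z).im = Real.cosh z.re * Real.sin z.im := by
  have : Complex.sinh z = (Real.sinh z.re * Real.cos z.im : ℝ) +
      (Real.cosh z.re * Real.sin z.im : ℝ) * Complex.I := by
    conv_lhs => rw [← Complex.re_add_im z, Complex.sinh_add, Complex.sinh_mul_I, Complex.cosh_mul_I]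
    push_cast; ring
  rw [this]
  constructor <;> simp [-Complex.ofReal_mul]

lemma cosh_parts (z : ℂ) : (Complex.cosh z).re = Real.cosh z.re * Real.cos z.im ∧
    (Complex.cosh z).im = Real.sinh z.re * Real.sin z.im := by
  have : Complex.cosh z = (Real.cosh z.re * Real.cos z.im : ℝ) +
      (Real.sinh z.re * Real.sin z.im : ℝ) * Complex.I := by
    conv_lhs => rw [← Complex.re_add_im z, Complex.cosh_add, Complex.sinh_mul_I, Complex.cosh_mul_I]
    push_cast; ring
  rw [this]
  constructor <;> simp [-Complex.ofReal_mul]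

lemma cosh_lower {z : ℂ} (hz : 0 < z.re) : Real.sinh z.re ≤ ‖Complex.cosh z‖ := by
  refine abs_le_of_sq_le_sq' ?_ (norm_nonneg _) |>.2
  rw [← Complex.normSq_eq_norm_sq, Complex.normSq_apply, (cosh_parts z).1, (cosh_parts z).2]
  nlinarith [Real.sin_sq_add_cos_sq z.im, Real.cosh_sq z.re, sq_nonneg (Real.cos z.im)]

lemma sinh_upper (z : ℂ) : ‖Complex.sinh z‖ ≤ Real.cosh z.re := by
  refine abs_le_of_sq_le_sq' ?_ (Real.cosh_pos _).le |>.2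
  rw [← Complex.normSq_eq_norm_sq, Complex.normSq_apply, (sinh_parts z).1, (sinh_parts z).2]
  nlinarith [Real.sin_sq_add_cos_sq z.im, Real.cosh_sq z.re, sq_nonneg (Real.cos z.im)]

lemma cosh_ne {z : ℂ} (hz : 0 < z.re) : Complex.cosh z ≠ 0 := by
  have := cosh_lower hz
  have h2 := Real.sinh_pos_iff.2 hz
  exact norm_pos_iff.1 (h2.trans_le this)

lemma tanh_re_pos {z : ℂ} (hz : 0 < z.re) : 0 < (Complex.tanh z).re := by
  rw [Complex.tanh_eq_sinh_div_cosh, Complex.div_re, ← add_div]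
  apply div_pos _ (Complex.normSq_pos.2 (cosh_ne hz))
  rw [(sinh_parts z).1, (sinh_parts z).2, (cosh_parts z).1, (cosh_parts z).2]
  have h : Real.sinh z.re * Real.cos z.im * (Real.cosh z.re * Real.cos z.im) +
    Real.cosh z.re * Real.sin z.im * (Real.sinh z.re * Real.sin z.im) =
      Real.sinh z.re * Real.cosh z.re := by
    linear_combination (Real.sinh z.re * Real.cosh z.re) * Real.sin_sq_add_cos_sq z.im
  rw [h]
  exact mul_pos (Real.sinh_pos_iff.2 hz) (Real.cosh_pos _)

lemma tanh_norm_le {z : ℂ} (hz : 1 / 2 ≤ z.re) : ‖Complex.tanh z‖ ≤ 3 := by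
  have h0 : 0 < z.re := by linarith
  have hs := Real.sinh_pos_iff.2 h0
  have h1 := cosh_lower h0
  have h2 := sinh_upper z
  have h3 : z.re ≤ Real.sinh z.re := Real.self_le_sinh_iff.2 h0.le
  have h4 : Real.cosh z.re - Real.sinh z.re = Real.exp (-z.re) := Real.cosh_sub_sinh _
  have h5 : Real.exp (-z.re) ≤ 1 := Real.exp_le_one_iff.2 (by linarith)
  rw [Complex.tanh_eq_sinh_div_cosh, norm_div, div_le_iff₀ (hs.trans_le h1)]
  linarith

lemma HH_diffAt {z : ℂ} (hz : 0 < z.re) : DifferentiableAt ℂ HH z := by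
  have h1 : DifferentiableAt ℂ Complex.tanh z := by
    have h : Complex.tanh = fun y => Complex.sinh y / Complex.cosh y := by
      funext y; exact Complex.tanh_eq_sinh_div_cosh y
    rw [h]
    exact Complex.differentiable_sinh.differentiableAt.fun_div
      Complex.differentiable_cosh.differentiableAt (cosh_ne hz)
  exact (h1.cpow (differentiableAt_const _) (Or.inl (tanh_re_pos hz))).mul
    (differentiableAt_id.cpow (differentiableAt_const _) (Or.inl hz))

lemma HH_real {t : ℝ} (ht : 0 < t) : HH t = (GG t : ℂ) := by
  unfold HH GG
  rw [ds_ne ht.ne', ← Complex.ofReal_tanh, ← Complex.ofReal_cpow (tanh_pos_aux ht).le,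
    ← Complex.ofReal_cpow ht.le, ← Complex.ofReal_mul, Real.sqrt_eq_rpow,
    Real.div_rpow (tanh_pos_aux ht).le ht.le, Real.rpow_neg ht.le]
  rfl

lemma HH_an {z : ℂ} (hz : 0 < z.re) : AnalyticAt ℂ HH z := by
  have ho : IsOpen {w : ℂ | 0 < w.re} := isOpen_lt continuous_const Complex.continuous_re
  exact DifferentiableOn.analyticAt (s := {w : ℂ | 0 < w.re})
    (fun w hw => (HH_diffAt hw).differentiableWithinAt) (ho.mem_nhds hz)

lemma deriv_link (n : ℕ) : ∀ t : ℝ, 0 < t →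
    iteratedDeriv n GG t = (iteratedDeriv n HH t).re := by
  induction n with
  | zero => intro t ht; simp [HH_real ht]
  | succ n ih =>
    intro t ht
    have ha : AnalyticAt ℂ (iteratedDeriv n HH) (t : ℂ) := by
      rw [iteratedDeriv_eq_iterate]
      exact (HH_an (z := (t : ℂ)) (by simpa using ht)).iterated_deriv n
    have h1 := ha.differentiableAt.hasDerivAt.real_of_complex
    rw [iteratedDeriv_succ, iteratedDeriv_succ, ← h1.deriv]
    apply Filter.EventuallyEq.deriv_eq
    filter_upwards [isOpen_Ioi.mem_nhds (show t ∈ Set.Ioi 0 from ht)] with y hy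
    exact ih y hy

lemma HH_norm {z : ℂ} {r : ℝ} (hr : 1 / 2 ≤ r) (hz : r ≤ z.re) :
    ‖HH z‖ ≤ 3 * r ^ (-(1 / 2) : ℝ) := by
  unfold HH
  rw [norm_mul, Complex.norm_cpow_real, Complex.norm_cpow_real]
  have h1 : ‖Complex.tanh z‖ ^ (1 / 2 : ℝ) ≤ 3 := by
    calc ‖Complex.tanh z‖ ^ (1 / 2 : ℝ) ≤ 3 ^ (1 / 2 : ℝ) :=
          Real.rpow_le_rpow (norm_nonneg _) (tanh_norm_le (hr.trans hz)) (by norm_num)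
      _ ≤ 3 ^ (1 : ℝ) := Real.rpow_le_rpow_of_exponent_le (by norm_num) (by norm_num)
      _ = 3 := by simp
  have h2 : ‖z‖ ^ (-(1 / 2) : ℝ) ≤ r ^ (-(1 / 2) : ℝ) :=
    Real.rpow_le_rpow_of_nonpos (by linarith)
      (hz.trans ((le_abs_self _).trans (Complex.abs_re_le_norm z))) (by norm_num)
  gcongr

lemma far_bound (n : ℕ) {t : ℝ} (ht : 1 ≤ t) :
    |iteratedDeriv n GG t| ≤ n.factorial * 3 * (t / 2) ^ (-(1 : ℝ) / 2 - n) := by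
  have ht0 : 0 < t / 2 := by linarith
  rw [deriv_link n t (by linarith)]
  refine (Complex.abs_re_le_norm _).trans ?_
  have hre : ∀ z ∈ Metric.closedBall (t : ℂ) (t / 2), t / 2 ≤ z.re := by
    intro z hz
    have h := (Complex.abs_re_le_norm (z - t)).trans (mem_closedBall_iff_norm.1 hz)
    rw [Complex.sub_re, Complex.ofReal_re] at h
    linarith [(abs_le.1 h).1]
  have hd : DiffContOnCl ℂ HH (Metric.ball (t : ℂ) (t / 2)) := by
    apply DifferentiableOn.diffContOnCl
    intro z hz
    exact (HH_diffAt (ht0.trans_le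
      (hre z (Metric.closure_ball_subset_closedBall hz)))).differentiableWithinAt
  have := Complex.norm_iteratedDeriv_le_of_forall_mem_sphere_norm_le n ht0 hd
    (C := 3 * (t / 2) ^ (-(1 / 2) : ℝ))
    (fun z hz => HH_norm (by linarith) (hre z (Metric.sphere_subset_closedBall hz)))
  refine this.trans (le_of_eq ?_)
  rw [Real.rpow_sub ht0, Real.rpow_natCast, neg_div]
  ring

lemma jap_eq (t : ℝ) : jap t = Real.sqrt (1 + t ^ 2) := by
  rw [jap, Real.sqrt_eq_rpow]

lemma jap_pos (t : ℝ) : 0 < jap t := by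
  rw [jap_eq]; exact Real.sqrt_pos.2 (by positivity)

lemma GG_bound (n : ℕ) : ∃ C : ℝ, 0 < C ∧ ∀ t : ℝ,
    |iteratedDeriv n GG t| ≤ C * jap t ^ (-(1 : ℝ) / 2 - n) := by
  have hc : Continuous (iteratedDeriv n GG) :=
    GG_smooth.continuous_iteratedDeriv n (by exact_mod_cast le_top)
  obtain ⟨M, hM⟩ := (isCompact_Icc (a := (-1 : ℝ)) (b := 1)).exists_bound_of_continuousOn
    hc.continuousOn
  have hM0 : 0 ≤ M := (norm_nonneg _).trans (hM 0 (by simp))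
  set s : ℝ := -(1 : ℝ) / 2 - n with hs
  have hs0 : s ≤ 0 := by
    have : (0 : ℝ) ≤ n := n.cast_nonneg
    rw [hs]; linarith
  have h4 : (0 : ℝ) < (1 / 4) ^ s := by positivity
  have hfar : ∀ t : ℝ, 1 ≤ t → |iteratedDeriv n GG t| ≤
      (M + n.factorial * 3) * (1 / 4) ^ s * jap t ^ s := by
    intro t ht
    refine (far_bound n ht).trans ?_
    have h1 : 1 / 4 * jap t ≤ t / 2 := by
      have : jap t ≤ 2 * t := by
        rw [jap_eq]; apply Real.sqrt_le_iff.2; constructor <;> nlinarith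
      linarith
    have h2 : (t / 2) ^ s ≤ (1 / 4 * jap t) ^ s :=
      Real.rpow_le_rpow_of_nonpos (by have := jap_pos t; positivity) h1 hs0
    rw [Real.mul_rpow (by norm_num) (jap_pos t).le] at h2
    rw [mul_assoc (M + _)]
    have h6 : (0 : ℝ) ≤ n.factorial := n.factorial.cast_nonneg
    have h7 : (0 : ℝ) ≤ (t / 2) ^ s := Real.rpow_nonneg (by linarith) _
    exact mul_le_mul (by linarith) h2 h7 (by positivity)
  refine ⟨(M + n.factorial * 3) * (1 / 4) ^ s, ?_, ?_⟩
  · have : (0 : ℝ) < n.factorial := by exact_mod_cast n.factorial_pos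
    positivity
  intro t
  by_cases h1 : 1 ≤ t
  · exact hfar t h1
  by_cases h2 : t ≤ -1
  · have h3 := hfar (-t) (by linarith)
    have h5 := iteratedDeriv_comp_neg n GG t
    have h6 : (fun x => GG (-x)) = GG := funext GG_even
    rw [h6] at h5
    have h7 : jap (-t) = jap t := by simp [jap]
    rw [h5, smul_eq_mul, abs_mul, abs_pow, abs_neg, abs_one, one_pow, one_mul, ← h7]
    exact h3
  · have h3 : t ∈ Set.Icc (-1 : ℝ) 1 := ⟨by linarith, by linarith⟩
    have hb := hM t h3
    rw [Real.norm_eq_abs] at hb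
    have hj : 1 / 4 * jap t ≤ 1 := by
      have : jap t ≤ 2 := by
        rw [jap_eq]; apply Real.sqrt_le_iff.2; constructor <;> nlinarith [h3.1, h3.2]
      linarith
    have hj0 := jap_pos t
    have h5 : 1 ≤ (1 / 4 * jap t) ^ s :=
      Real.one_le_rpow_of_pos_of_le_one_of_nonpos (by positivity) hj hs0
    rw [Real.mul_rpow (by norm_num) hj0.le] at h5
    have h6 : (0 : ℝ) ≤ n.factorial := n.factorial.cast_nonneg
    rw [mul_assoc]
    nlinarith

/-- For `μ ∈ (0,1]`, the function `g_μ` is smooth on `ℝ`, and for every `n ∈ ℕ`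
there is a constant `C_n`, independent of `μ`, with
`|g_μ^{(n)}(ξ)| ≤ C_n μ^{n/2} ⟨√μ ξ⟩^{-1/2 - n}` for all `ξ ∈ ℝ`. -/
theorem gsymb_smooth_and_deriv_bounds :
    (∀ μ : ℝ, 0 < μ → μ ≤ 1 → ContDiff ℝ (⊤ : ℕ∞) (gsymb μ)) ∧
      ∀ n : ℕ, ∃ C : ℝ, 0 < C ∧
        ∀ μ : ℝ, 0 < μ → μ ≤ 1 → ∀ ξ : ℝ,
          |iteratedDeriv n (gsymb μ) ξ|
            ≤ C * μ ^ ((n : ℝ) / 2) * jap (Real.sqrt μ * ξ) ^ (-(1 : ℝ) / 2 - n) := by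
  constructor
  · intro μ h0 _
    rw [gsymb_eq h0]
    exact GG_smooth.comp (contDiff_const.mul contDiff_id)
  · intro n
    obtain ⟨C, hC, hb⟩ := GG_bound n
    refine ⟨C, hC, fun μ h0 _ ξ => ?_⟩
    have hn : ContDiff ℝ n GG := GG_smooth.of_le (by exact_mod_cast le_top)
    rw [gsymb_eq h0, iteratedDeriv_comp_const_mul hn]
    have hp : Real.sqrt μ ^ n = μ ^ ((n : ℝ) / 2) := by
      rw [Real.sqrt_eq_rpow, ← Real.rpow_natCast, ← Real.rpow_mul h0.le]
      congr 1; ring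
    have hpos : 0 < μ ^ ((n : ℝ) / 2) := Real.rpow_pos_of_pos h0 _
    simp only [hp]
    rw [abs_mul, abs_of_pos hpos, mul_comm C, mul_assoc]
    exact mul_le_mul_of_nonneg_left (hb _) hpos.le
end
end

section
/- There exists a constant C (depending only on the cutoff β) such that for all λ > 0, all x ∈ ℝ and all t ∈ ℝ \ {0}, the oscillatory integral I_{λ,1}(x,t) = ∫_ℝ e^{i(xξ + t m_1(ξ))} β(|ξ|/λ) dξ satisfies |I_{λ,1}(x,t)| ≤ C |t|^{-1/2} λ^{-1/2} ⟨λ⟩^{5/4}. -/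
noncomputable section

open MeasureTheory

/-- The symbol `m₁(ξ) = ξ (tanh|ξ|/|ξ|)^{1/2}`, with `m₁(0) = 0`. -/
def m1 (ξ : ℝ) : ℝ :=
  if ξ = 0 then 0 else ξ * Real.sqrt (Real.tanh |ξ| / |ξ|)

/-- `β(s) = χ(s) - χ(2s)` built from the cutoff `χ`. -/
def betaCut (χ : ℝ → ℝ) (s : ℝ) : ℝ := χ s - χ (2 * s)

/-- The oscillatory integral `I_{λ,1}(x,t) = ∫_ℝ e^{i(xξ + t m₁(ξ))} β(|ξ|/λ) dξ`. -/
def oscInt (χ : ℝ → ℝ) (lam x t : ℝ) : ℂ :=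
  ∫ ξ : ℝ, Complex.exp (Complex.I * ((x * ξ + t * m1 ξ : ℝ) : ℂ)) *
    ((betaCut χ (|ξ| / lam) : ℝ) : ℂ)

lemma vdc1 (φ p q : ℝ → ℝ) (a b δ : ℝ) (hab : a ≤ b) (hδ : 0 < δ)
    (hφ : ∀ x ∈ Set.Icc a b, HasDerivAt φ (p x) x)
    (hp : ∀ x ∈ Set.Icc a b, HasDerivAt p (q x) x)
    (hq : ContinuousOn q (Set.Icc a b))
    (hq0 : ∀ x ∈ Set.Icc a b, 0 ≤ q x)
    (hpδ : ∀ x ∈ Set.Icc a b, δ ≤ |p x|) :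
    ‖∫ x in a..b, Complex.exp (Complex.I * (φ x : ℂ))‖ ≤ 4 / δ := by
  have hu : Set.uIcc a b = Set.Icc a b := Set.uIcc_of_le hab
  have hp0 : ∀ x ∈ Set.Icc a b, p x ≠ 0 := by
    intro x hx h
    have := hpδ x hx
    rw [h, abs_zero] at this
    linarith
  have hφc : ContinuousOn φ (Set.Icc a b) := fun x hx => (hφ x hx).continuousAt.continuousWithinAt
  have hpc : ContinuousOn p (Set.Icc a b) := fun x hx => (hp x hx).continuousAt.continuousWithinAt
  have hE : ∀ x ∈ Set.Icc a b, HasDerivAt (fun x => Complex.exp (Complex.I * (φ x : ℂ)))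
      (Complex.exp (Complex.I * (φ x : ℂ)) * (Complex.I * (p x : ℂ))) x := by
    intro x hx
    exact ((hφ x hx).ofReal_comp.const_mul Complex.I).cexp
  have hR : ∀ x ∈ Set.Icc a b, HasDerivAt (fun x => (p x)⁻¹) (-(q x) / (p x)^2) x := by
    intro x hx
    exact (hp x hx).inv (hp0 x hx)
  have hRc : ContinuousOn (fun x => -(q x) / (p x)^2) (Set.Icc a b) :=
    hq.neg.div (hpc.pow 2) (fun x hx => pow_ne_zero 2 (hp0 x hx))
  have hφC : ContinuousOn (fun x => (φ x : ℂ)) (Set.Icc a b) :=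
    Complex.continuous_ofReal.comp_continuousOn hφc
  have hpC : ContinuousOn (fun x => (p x : ℂ)) (Set.Icc a b) :=
    Complex.continuous_ofReal.comp_continuousOn hpc
  have hEc : ContinuousOn (fun x => Complex.exp (Complex.I * (φ x : ℂ))) (Set.Icc a b) :=
    (continuousOn_const.mul hφC).cexp
  have hE'c : ContinuousOn (fun x => Complex.exp (Complex.I * (φ x : ℂ)) * (Complex.I * (p x : ℂ)))
      (Set.Icc a b) := hEc.mul (continuousOn_const.mul hpC)
  have hRCc : ContinuousOn (fun x => ((-(q x) / (p x)^2 : ℝ) : ℂ)) (Set.Icc a b) :=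
    Complex.continuous_ofReal.comp_continuousOn hRc
  have parts := intervalIntegral.integral_mul_deriv_eq_deriv_mul (a := a) (b := b)
    (u := fun x => (((p x)⁻¹ : ℝ) : ℂ)) (v := fun x => Complex.exp (Complex.I * (φ x : ℂ)))
    (u' := fun x => ((-(q x) / (p x)^2 : ℝ) : ℂ))
    (v' := fun x => Complex.exp (Complex.I * (φ x : ℂ)) * (Complex.I * (p x : ℂ)))
    (by rw [hu]; exact fun x hx => (hR x hx).ofReal_comp) (by rw [hu]; exact hE)
    (ContinuousOn.intervalIntegrable (by rw [hu]; exact hRCc))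
    (ContinuousOn.intervalIntegrable (by rw [hu]; exact hE'c))
  have lhs : (∫ x in a..b, (((p x)⁻¹ : ℝ) : ℂ) *
      (Complex.exp (Complex.I * (φ x : ℂ)) * (Complex.I * (p x : ℂ)))) =
      Complex.I * ∫ x in a..b, Complex.exp (Complex.I * (φ x : ℂ)) := by
    rw [← intervalIntegral.integral_const_mul]
    apply intervalIntegral.integral_congr
    intro x hx
    rw [hu] at hx
    have : (p x : ℂ) ≠ 0 := by exact_mod_cast hp0 x hx
    push_cast
    field_simp
  rw [lhs] at parts
  have hn : ∀ y : ℝ, ‖Complex.exp (Complex.I * (y : ℂ))‖ = 1 := by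
    intro y; rw [mul_comm]; exact Complex.norm_exp_ofReal_mul_I y
  have hinv : ∀ x ∈ Set.Icc a b, |(p x)⁻¹| ≤ 1 / δ := by
    intro x hx
    rw [abs_inv, ← one_div]
    exact one_div_le_one_div_of_le hδ (hpδ x hx)
  have ftc : ∫ x in a..b, (-(q x) / (p x)^2) = (p b)⁻¹ - (p a)⁻¹ :=
    intervalIntegral.integral_eq_sub_of_hasDerivAt (by rw [hu]; exact hR)
      (ContinuousOn.intervalIntegrable (by rw [hu]; exact hRc))
  have ha : a ∈ Set.Icc a b := ⟨le_rfl, hab⟩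
  have hb : b ∈ Set.Icc a b := ⟨hab, le_rfl⟩
  have h3 : ‖∫ x in a..b, ((-(q x) / (p x)^2 : ℝ) : ℂ) * Complex.exp (Complex.I * (φ x : ℂ))‖
      ≤ 2 / δ := by
    have := intervalIntegral.norm_integral_le_of_norm_le (μ := volume) hab
      (f := fun x => ((-(q x) / (p x)^2 : ℝ) : ℂ) * Complex.exp (Complex.I * (φ x : ℂ)))
      (g := fun x => -(-(q x) / (p x)^2)) (by
        refine Filter.Eventually.of_forall fun x hx => ?_
        have hx' : x ∈ Set.Icc a b := ⟨hx.1.le, hx.2⟩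
        rw [norm_mul, hn, mul_one, Complex.norm_real, Real.norm_eq_abs, abs_of_nonpos]
        have := hq0 x hx'
        rw [neg_div]
        have : 0 ≤ q x / p x ^ 2 := by positivity
        linarith)
      (ContinuousOn.intervalIntegrable (by rw [hu]; exact hRc.neg))
    rw [intervalIntegral.integral_neg, ftc] at this
    refine this.trans ?_
    have h1 := abs_le.1 (hinv a ha)
    have h2 := abs_le.1 (hinv b hb)
    have : 2 / δ = 1/δ + 1/δ := by ring
    linarith [h1.2, h2.1]
  have : ‖∫ x in a..b, Complex.exp (Complex.I * (φ x : ℂ))‖ =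
     ‖Complex.I * ∫ x in a..b, Complex.exp (Complex.I * (φ x : ℂ))‖ := by
    rw [norm_mul, Complex.norm_I, one_mul]
  rw [this, parts]
  refine (norm_sub_le _ _).trans ?_
  have h4 := norm_sub_le ((((p b)⁻¹ : ℝ) : ℂ) * Complex.exp (Complex.I * (φ b : ℂ)))
    ((((p a)⁻¹ : ℝ) : ℂ) * Complex.exp (Complex.I * (φ a : ℂ)))
  rw [norm_mul, norm_mul, hn, hn, mul_one, mul_one, Complex.norm_real, Complex.norm_real,
    Real.norm_eq_abs, Real.norm_eq_abs] at h4
  have h5 := hinv a ha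
  have h6 := hinv b hb
  have : 4 / δ = 1/δ + 1/δ + 2 / δ := by ring
  linarith

lemma vdc2 (φ p q : ℝ → ℝ) (a b μ : ℝ) (hab : a ≤ b) (hμ : 0 < μ)
    (hφ : ∀ x ∈ Set.Icc a b, HasDerivAt φ (p x) x)
    (hp : ∀ x ∈ Set.Icc a b, HasDerivAt p (q x) x)
    (hq : ContinuousOn q (Set.Icc a b))
    (hq0 : ∀ x ∈ Set.Icc a b, μ ≤ q x) :
    ‖∫ x in a..b, Complex.exp (Complex.I * (φ x : ℂ))‖ ≤ 10 / √μ := by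
  have hφc : ContinuousOn φ (Set.Icc a b) := fun x hx => (hφ x hx).continuousAt.continuousWithinAt
  have hpc : ContinuousOn p (Set.Icc a b) := fun x hx => (hp x hx).continuousAt.continuousWithinAt
  have hEc : ContinuousOn (fun x => Complex.exp (Complex.I * (φ x : ℂ))) (Set.Icc a b) :=
    (continuousOn_const.mul (Complex.continuous_ofReal.comp_continuousOn hφc)).cexp
  have hmv : ∀ x ∈ Set.Icc a b, ∀ y ∈ Set.Icc a b, x ≤ y → μ * (y - x) ≤ p y - p x := by
    apply Convex.mul_sub_le_image_sub_of_le_deriv (convex_Icc a b) hpc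
    · intro x hx
      exact (hp x (interior_subset hx)).differentiableAt.differentiableWithinAt
    · intro x hx
      rw [(hp x (interior_subset hx)).deriv]
      exact hq0 x (interior_subset hx)
  have ha : a ∈ Set.Icc a b := ⟨le_rfl, hab⟩
  have hb : b ∈ Set.Icc a b := ⟨hab, le_rfl⟩
  obtain ⟨c, hc, hc1, hc2⟩ : ∃ c ∈ Set.Icc a b, (∀ x ∈ Set.Icc a b, c < x → μ * (x - c) ≤ p x) ∧
      (∀ x ∈ Set.Icc a b, x < c → μ * (c - x) ≤ - p x) := by
    rcases le_total 0 (p a) with h | h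
    · exact ⟨a, ha, fun x hx hcx => by linarith [hmv a ha x hx hcx.le],
        fun x hx hcx => absurd hcx (not_lt.2 hx.1)⟩
    rcases le_total (p b) 0 with h' | h'
    · exact ⟨b, hb, fun x hx hcx => absurd hcx (not_lt.2 hx.2),
        fun x hx hcx => by linarith [hmv x hx b hb hcx.le]⟩
    obtain ⟨c, hc, hpc0⟩ := intermediate_value_Icc hab hpc (⟨h, h'⟩ : (0 : ℝ) ∈ Set.Icc (p a) (p b))
    exact ⟨c, hc, fun x hx hcx => by linarith [hmv c hc x hx hcx.le],
      fun x hx hcx => by linarith [hmv x hx c hc hcx.le]⟩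
  have hs : 0 < √μ := Real.sqrt_pos.2 hμ
  have hs2 : √μ * √μ = μ := Real.mul_self_sqrt hμ.le
  set d : ℝ := 1 / √μ with hd
  have hd0 : 0 < d := by positivity
  have hμd : μ * d = √μ := by
    rw [hd, mul_one_div, div_eq_iff hs.ne', hs2]
  set c1 := max a (c - d) with hc1d
  set c2 := min b (c + d) with hc2d
  have k1 : a ≤ c1 := le_max_left _ _
  have k2 : c1 ≤ c := max_le hc.1 (by linarith)
  have k3 : c ≤ c2 := le_min hc.2 (by linarith)
  have k4 : c2 ≤ b := min_le_left _ _
  have sub1 : Set.Icc a c1 ⊆ Set.Icc a b := Set.Icc_subset_Icc le_rfl (by linarith)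
  have sub2 : Set.Icc c1 c2 ⊆ Set.Icc a b := Set.Icc_subset_Icc k1 k4
  have sub3 : Set.Icc c2 b ⊆ Set.Icc a b := Set.Icc_subset_Icc (by linarith) le_rfl
  have B1 : ‖∫ x in a..c1, Complex.exp (Complex.I * (φ x : ℂ))‖ ≤ 4 / √μ := by
    rcases le_total (c - d) a with h | h
    · rw [hc1d, max_eq_left h, intervalIntegral.integral_same, norm_zero]; positivity
    · have e : c1 = c - d := max_eq_right h
      refine vdc1 φ p q a c1 _ k1 hs (fun x hx => hφ x (sub1 hx)) (fun x hx => hp x (sub1 hx))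
        (hq.mono sub1) (fun x hx => hμ.le.trans (hq0 x (sub1 hx))) (fun x hx => ?_)
      have hx2 := hx.2
      have := hc2 x (sub1 hx) (by linarith)
      have h5 : μ * d ≤ μ * (c - x) := mul_le_mul_of_nonneg_left (by linarith) hμ.le
      exact le_trans (by linarith) (neg_le_abs (p x))
  have B3 : ‖∫ x in c2..b, Complex.exp (Complex.I * (φ x : ℂ))‖ ≤ 4 / √μ := by
    rcases le_total b (c + d) with h | h
    · rw [hc2d, min_eq_left h, intervalIntegral.integral_same, norm_zero]; positivity
    · have e : c2 = c + d := min_eq_right h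
      refine vdc1 φ p q c2 b _ k4 hs (fun x hx => hφ x (sub3 hx)) (fun x hx => hp x (sub3 hx))
        (hq.mono sub3) (fun x hx => hμ.le.trans (hq0 x (sub3 hx))) (fun x hx => ?_)
      have hx2 := hx.1
      have := hc1 x (sub3 hx) (by linarith)
      have h5 : μ * d ≤ μ * (x - c) := mul_le_mul_of_nonneg_left (by linarith) hμ.le
      exact le_trans (by linarith) (le_abs_self (p x))
  have B2 : ‖∫ x in c1..c2, Complex.exp (Complex.I * (φ x : ℂ))‖ ≤ 2 / √μ := by
    have := intervalIntegral.norm_integral_le_of_norm_le_const (a := c1) (b := c2) (C := 1)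
      (f := fun x => Complex.exp (Complex.I * (φ x : ℂ)))
      (fun x _ => by rw [mul_comm]; exact (Complex.norm_exp_ofReal_mul_I _).le)
    refine this.trans ?_
    rw [abs_of_nonneg (by linarith)]
    have e1 : c - d ≤ c1 := le_max_right _ _
    have e2 : c2 ≤ c + d := min_le_right _ _
    have : 2 / √μ = 2 * d := by rw [hd]; ring
    linarith
  have I1 : IntervalIntegrable (fun x => Complex.exp (Complex.I * (φ x : ℂ))) volume a c1 :=
    ContinuousOn.intervalIntegrable (by rw [Set.uIcc_of_le k1]; exact hEc.mono sub1)
  have I2 : IntervalIntegrable (fun x => Complex.exp (Complex.I * (φ x : ℂ))) volume c1 c2 :=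
    ContinuousOn.intervalIntegrable (by rw [Set.uIcc_of_le (k2.trans k3)]; exact hEc.mono sub2)
  have I3 : IntervalIntegrable (fun x => Complex.exp (Complex.I * (φ x : ℂ))) volume c2 b :=
    ContinuousOn.intervalIntegrable (by rw [Set.uIcc_of_le k4]; exact hEc.mono sub3)
  rw [← intervalIntegral.integral_add_adjacent_intervals (I1.trans I2) I3,
    ← intervalIntegral.integral_add_adjacent_intervals I1 I2]
  refine (norm_add_le _ _).trans ?_
  have := norm_add_le (∫ x in a..c1, Complex.exp (Complex.I * (φ x : ℂ)))
    (∫ x in c1..c2, Complex.exp (Complex.I * (φ x : ℂ)))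
  have e : 10 / √μ = 4 / √μ + 2 / √μ + 4 / √μ := by ring
  linarith

lemma vdc2' (φ p q : ℝ → ℝ) (a b μ : ℝ) (hab : a ≤ b) (hμ : 0 < μ)
    (hφ : ∀ x ∈ Set.Icc a b, HasDerivAt φ (p x) x)
    (hp : ∀ x ∈ Set.Icc a b, HasDerivAt p (q x) x)
    (hq : ContinuousOn q (Set.Icc a b))
    (hq0 : (∀ x ∈ Set.Icc a b, μ ≤ q x) ∨ (∀ x ∈ Set.Icc a b, q x ≤ -μ)) :
    ‖∫ x in a..b, Complex.exp (Complex.I * (φ x : ℂ))‖ ≤ 10 / √μ := by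
  rcases hq0 with h | h
  · exact vdc2 φ p q a b μ hab hμ hφ hp hq h
  · have := vdc2 (fun x => -φ x) (fun x => -p x) (fun x => -q x) a b μ hab hμ
      (fun x hx => (hφ x hx).neg) (fun x hx => (hp x hx).neg) hq.neg
      (fun x hx => by linarith [h x hx])
    refine le_trans (le_of_eq ?_) this
    rw [intervalIntegral.integral_of_le hab, intervalIntegral.integral_of_le hab,
      ← RCLike.norm_conj, ← integral_conj]
    congr 2
    ext x
    rw [← Complex.exp_conj]
    simp

lemma vdc3 (φ p q ψ ψ' : ℝ → ℝ) (a b μ M : ℝ) (hab : a ≤ b) (hμ : 0 < μ)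
    (hφ : ∀ x ∈ Set.Icc a b, HasDerivAt φ (p x) x)
    (hp : ∀ x ∈ Set.Icc a b, HasDerivAt p (q x) x)
    (hq : ContinuousOn q (Set.Icc a b))
    (hq0 : (∀ x ∈ Set.Icc a b, μ ≤ q x) ∨ (∀ x ∈ Set.Icc a b, q x ≤ -μ))
    (hψ : ∀ x ∈ Set.Icc a b, HasDerivAt ψ (ψ' x) x)
    (hψc : ContinuousOn ψ' (Set.Icc a b)) (hψM : ∀ x ∈ Set.Icc a b, |ψ' x| ≤ M)
    (hψb : ψ b = 0) :
    ‖∫ x in a..b, Complex.exp (Complex.I * (φ x : ℂ)) * (ψ x : ℂ)‖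
      ≤ M * (10 / √μ) * (b - a) := by
  have hu : Set.uIcc a b = Set.Icc a b := Set.uIcc_of_le hab
  have hφc : ContinuousOn φ (Set.Icc a b) := fun x hx => (hφ x hx).continuousAt.continuousWithinAt
  have hEc : ContinuousOn (fun x => Complex.exp (Complex.I * (φ x : ℂ))) (Set.Icc a b) :=
    (continuousOn_const.mul (Complex.continuous_ofReal.comp_continuousOn hφc)).cexp
  have hEi : IntervalIntegrable (fun x => Complex.exp (Complex.I * (φ x : ℂ))) volume a b :=
    ContinuousOn.intervalIntegrable (by rw [hu]; exact hEc)
  have hFn : ∀ x ∈ Set.Icc a b,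
      ‖∫ y in a..x, Complex.exp (Complex.I * (φ y : ℂ))‖ ≤ 10 / √μ := by
    intro x hx
    have sub : Set.Icc a x ⊆ Set.Icc a b := Set.Icc_subset_Icc le_rfl hx.2
    exact vdc2' φ p q a x μ hx.1 hμ (fun y hy => hφ y (sub hy)) (fun y hy => hp y (sub hy))
      (hq.mono sub) (hq0.imp (fun h y hy => h y (sub hy)) (fun h y hy => h y (sub hy)))
  have parts := intervalIntegral.integral_mul_deriv_eq_deriv_mul_of_hasDerivAt (a := a) (b := b)
    (u := fun x => (ψ x : ℂ)) (v := fun x => ∫ y in a..x, Complex.exp (Complex.I * (φ y : ℂ)))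
    (u' := fun x => (ψ' x : ℂ)) (v' := fun x => Complex.exp (Complex.I * (φ x : ℂ)))
    (by
      rw [hu]
      exact Complex.continuous_ofReal.comp_continuousOn
        (fun x hx => (hψ x hx).continuousAt.continuousWithinAt))
    (intervalIntegral.continuousOn_primitive_interval (by
      rw [hu]; exact hEc.integrableOn_Icc))
    (by
      rw [min_eq_left hab, max_eq_right hab]
      exact fun x hx => (hψ x ⟨hx.1.le, hx.2.le⟩).ofReal_comp)
    (by
      rw [min_eq_left hab, max_eq_right hab]
      intro x hx
      have hx' : x ∈ Set.Icc a b := ⟨hx.1.le, hx.2.le⟩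
      refine intervalIntegral.integral_hasDerivAt_right ?_ ?_ ?_
      · exact hEi.mono_set (by
          rw [hu, Set.uIcc_of_le hx'.1]; exact Set.Icc_subset_Icc le_rfl hx'.2)
      · exact ContinuousOn.stronglyMeasurableAtFilter isOpen_Ioo
          (hEc.mono Set.Ioo_subset_Icc_self) x hx
      · exact hEc.continuousAt (Icc_mem_nhds hx.1 hx.2))
    (ContinuousOn.intervalIntegrable (by
      rw [hu]; exact Complex.continuous_ofReal.comp_continuousOn hψc))
    hEi
  simp only [hψb, intervalIntegral.integral_same, Complex.ofReal_zero, zero_mul, mul_zero,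
    sub_zero, zero_sub] at parts
  have e : (∫ x in a..b, Complex.exp (Complex.I * (φ x : ℂ)) * (ψ x : ℂ)) =
      ∫ x in a..b, (ψ x : ℂ) * Complex.exp (Complex.I * (φ x : ℂ)) := by
    simp only [mul_comm]
  rw [e, parts, norm_neg]
  refine (intervalIntegral.norm_integral_le_of_norm_le_const (C := M * (10 / √μ)) ?_).trans ?_
  · intro x hx
    rw [Set.uIoc_of_le hab] at hx
    have hx' : x ∈ Set.Icc a b := ⟨hx.1.le, hx.2⟩
    rw [norm_mul, Complex.norm_real, Real.norm_eq_abs]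
    exact mul_le_mul (hψM x hx') (hFn x hx') (norm_nonneg _) ((abs_nonneg _).trans (hψM x hx'))
  · rw [abs_of_nonneg (by linarith)]

/-- First derivative of `m1` on the positive axis. -/
def m1p (ξ : ℝ) : ℝ :=
  (Real.tanh ξ + ξ * (1 - Real.tanh ξ ^ 2)) / (2 * √(ξ * Real.tanh ξ))

/-- Second derivative of `m1` on the positive axis. -/
def m1q (ξ : ℝ) : ℝ :=
  -((Real.tanh ξ - ξ * (1 - Real.tanh ξ ^ 2)) ^ 2
    + 4 * ξ ^ 2 * (1 - Real.tanh ξ ^ 2) * Real.tanh ξ ^ 2)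
    / (4 * (ξ * Real.tanh ξ) * √(ξ * Real.tanh ξ))

lemma tanh_pos' {x : ℝ} (hx : 0 < x) : 0 < Real.tanh x := by
  rw [Real.tanh_eq_sinh_div_cosh]
  exact div_pos (Real.sinh_pos_iff.2 hx) (Real.cosh_pos x)

lemma hasDerivAt_tanh' (x : ℝ) : HasDerivAt Real.tanh (1 - Real.tanh x ^ 2) x := by
  have h := (Real.hasDerivAt_sinh x).div (Real.hasDerivAt_cosh x) (Real.cosh_pos x).ne'
  have e : Real.tanh = fun y => Real.sinh y / Real.cosh y := by
    ext y; exact Real.tanh_eq_sinh_div_cosh y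
  rw [e]
  refine h.congr_deriv ?_
  have := (Real.cosh_pos x).ne'
  field_simp

lemma m1_pos {x : ℝ} (hx : 0 < x) : m1 x = √(x * Real.tanh x) := by
  rw [m1, if_neg hx.ne', abs_of_pos hx]
  have e : x * Real.tanh x = x ^ 2 * (Real.tanh x / x) := by field_simp
  rw [e, Real.sqrt_mul (sq_nonneg x), Real.sqrt_sq hx.le]

lemma m1_neg (x : ℝ) : m1 (-x) = - m1 x := by
  unfold m1
  by_cases h : x = 0
  · simp [h]
  · simp [h]

lemma hasDerivAt_m1 {x : ℝ} (hx : 0 < x) : HasDerivAt m1 (m1p x) x := by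
  have hT := tanh_pos' hx
  have h : HasDerivAt (fun y => √(y * Real.tanh y)) (m1p x) x := by
    have h1 := ((hasDerivAt_id x).mul (hasDerivAt_tanh' x)).sqrt (mul_pos hx hT).ne'
    refine h1.congr_deriv ?_
    simp [m1p]
  refine h.congr_of_eventuallyEq ?_
  filter_upwards [lt_mem_nhds hx] with y hy using m1_pos hy

lemma hasDerivAt_m1p {x : ℝ} (hx : 0 < x) : HasDerivAt m1p (m1q x) x := by
  have hT := tanh_pos' hx
  have hxT := mul_pos hx hT
  have hr : 0 < √(x * Real.tanh x) := Real.sqrt_pos.2 hxT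
  have hr2 : √(x * Real.tanh x) ^ 2 = x * Real.tanh x := Real.sq_sqrt hxT.le
  have hN := (hasDerivAt_tanh' x).add ((hasDerivAt_id x).mul (((hasDerivAt_tanh' x).pow 2).const_sub 1))
  have hD := (((hasDerivAt_id x).mul (hasDerivAt_tanh' x)).sqrt hxT.ne').const_mul 2
  have h := hN.div hD (by simpa using hr.ne')
  refine h.congr_deriv ?_
  simp only [id, Pi.mul_apply, Pi.pow_apply, Pi.add_apply, m1q]
  set r := √(x * Real.tanh x) with hrdef
  set T := Real.tanh x
  rw [div_eq_div_iff (by positivity) (by positivity)]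
  field_simp
  simp only [Nat.cast_ofNat]
  ring_nf
  simp only [hr2]
  ring

lemma continuous_tanh' : Continuous Real.tanh :=
  continuous_iff_continuousAt.2 fun x => (hasDerivAt_tanh' x).continuousAt

lemma continuousOn_m1q : ContinuousOn m1q (Set.Ioi 0) := by
  have hc := continuous_tanh'
  unfold m1q
  refine ContinuousOn.div (by fun_prop) (by fun_prop) ?_
  intro x hx
  have := mul_pos hx (tanh_pos' hx)
  have hr : 0 < √(x * Real.tanh x) := Real.sqrt_pos.2 this
  positivity

lemma m1q_small {x : ℝ} (hx : 0 < x) (hx1 : x ≤ 1) : m1q x ≤ -(x / 16) := by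
  have hT := tanh_pos' hx
  have hc0 := Real.cosh_pos x
  have hc1 : Real.cosh x ≤ 2 := by
    have h1 : Real.cosh x ≤ Real.cosh 1 := by
      rw [Real.cosh_le_cosh, abs_of_pos hx, abs_one]; exact hx1
    have h2 : Real.cosh 1 ≤ 2 := by
      rw [Real.cosh_eq]
      have h3 := Real.exp_one_lt_d9
      have h4 : Real.exp (-1) ≤ 1 := Real.exp_le_one_iff.2 (by norm_num)
      linarith
    linarith
  have hs := Real.self_le_sinh_iff.2 hx.le
  have hTe : Real.tanh x = Real.sinh x / Real.cosh x := Real.tanh_eq_sinh_div_cosh x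
  have hTl : x / 2 ≤ Real.tanh x := by
    rw [hTe, div_le_div_iff₀ (by norm_num) hc0]
    nlinarith
  have hS : 1 / 4 ≤ 1 - Real.tanh x ^ 2 := by
    have : 1 - Real.tanh x ^ 2 = 1 / Real.cosh x ^ 2 := by
      rw [hTe]; field_simp; rw [Real.cosh_sq]; ring
    rw [this]
    apply one_div_le_one_div_of_le (by positivity)
    nlinarith
  have hTu : Real.tanh x ≤ x := by
    have h := image_sub_le_mul_sub_of_deriv_le (f := Real.tanh) (C := 1)
      (fun y => (hasDerivAt_tanh' y).differentiableAt)
      (fun y => by rw [(hasDerivAt_tanh' y).deriv]; nlinarith [sq_nonneg (Real.tanh y)]) hx.le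
    rw [Real.tanh_zero] at h
    linarith
  have hxT := mul_pos hx hT
  have hru : √(x * Real.tanh x) ≤ x := by
    rw [Real.sqrt_le_left hx.le]
    nlinarith
  have hr : 0 < √(x * Real.tanh x) := Real.sqrt_pos.2 hxT
  unfold m1q
  rw [neg_div, neg_le_neg_iff, le_div_iff₀ (by positivity)]
  set r := √(x * Real.tanh x)
  set T := Real.tanh x
  have h1 : x / 16 * (4 * (x * T) * r) ≤ x / 16 * (4 * (x * x) * x) := by gcongr
  have h2 : 4 * x ^ 2 * (1 / 4) * (x / 2) ^ 2 ≤ 4 * x ^ 2 * (1 - T ^ 2) * T ^ 2 := by gcongr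
  nlinarith [sq_nonneg (T - x * (1 - T ^ 2))]

lemma m1q_large {x : ℝ} (hx1 : 1 ≤ x) : m1q x ≤ -(1 / (100 * (x * √x))) := by
  have hx : 0 < x := by linarith
  have hT := tanh_pos' hx
  have hc0 := Real.cosh_pos x
  have hs := Real.self_le_sinh_iff.2 hx.le
  have hTe : Real.tanh x = Real.sinh x / Real.cosh x := Real.tanh_eq_sinh_div_cosh x
  have hTu := Real.tanh_lt_one x
  have hSe : 1 - Real.tanh x ^ 2 = 1 / Real.cosh x ^ 2 := by
    rw [hTe]; field_simp; rw [Real.cosh_sq]; ring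
  have hS0 : 0 ≤ 1 - Real.tanh x ^ 2 := by rw [hSe]; positivity
  have hSu : 1 - Real.tanh x ^ 2 ≤ 1 / (1 + x ^ 2) := by
    rw [hSe]
    apply one_div_le_one_div_of_le (by positivity)
    rw [Real.cosh_sq]; nlinarith
  have hS2 : 1 - Real.tanh x ^ 2 ≤ 1 / 2 := hSu.trans (one_div_le_one_div_of_le (by norm_num) (by nlinarith))
  have hxS : x * (1 - Real.tanh x ^ 2) ≤ 1 / 2 := by
    have : x * (1 - Real.tanh x ^ 2) ≤ x * (1 / (1 + x ^ 2)) := by gcongr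
    refine this.trans ?_
    rw [mul_one_div, div_le_div_iff₀ (by positivity) (by norm_num)]
    nlinarith [sq_nonneg (x - 1)]
  have hxT := mul_pos hx hT
  have hr : 0 < √(x * Real.tanh x) := Real.sqrt_pos.2 hxT
  have hru : √(x * Real.tanh x) ≤ √x := Real.sqrt_le_sqrt (by nlinarith)
  have hx0 : 0 < √x := Real.sqrt_pos.2 hx
  unfold m1q
  rw [neg_div, neg_le_neg_iff, le_div_iff₀ (by positivity), one_div, inv_mul_le_iff₀ (by positivity)]
  set r := √(x * Real.tanh x)
  set T := Real.tanh x
  have hT7 : 7 / 10 ≤ T := by nlinarith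
  have h1 : 4 * (x * T) * r ≤ 4 * (x * 1) * √x := by gcongr
  have h2 : 0 ≤ 4 * x ^ 2 * (1 - T ^ 2) * T ^ 2 := by positivity
  have h3 : (1 / 5) ^ 2 ≤ (T - x * (1 - T ^ 2)) ^ 2 := by
    gcongr; linarith
  have h4 : 0 < x * √x := by positivity
  nlinarith

lemma jap_ge_one (x : ℝ) : 1 ≤ jap x :=
  Real.one_le_rpow (by nlinarith [sq_nonneg x]) (by norm_num)

lemma jap_ge_self (x : ℝ) : x ≤ jap x := by
  rw [jap, ← Real.sqrt_eq_rpow]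
  exact Real.le_sqrt_of_sq_le (by linarith)

lemma m1q_bound {lam x : ℝ} (hl : 0 < lam) (hx : x ∈ Set.Icc (lam / 2) (2 * lam)) :
    m1q x ≤ -(lam / (400 * (jap lam ^ 2 * √(jap lam)))) := by
  have hJ1 := jap_ge_one lam
  have hJ2 := jap_ge_self lam
  set J := jap lam
  have hJ0 : 0 < J := by linarith
  have hs1 : 1 ≤ √J := Real.one_le_sqrt.2 hJ1
  have hx0 : 0 < x := by linarith [hx.1]
  rcases le_total x 1 with h | h
  · refine (m1q_small hx0 h).trans (neg_le_neg ?_)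
    rw [div_le_div_iff₀ (by positivity) (by norm_num)]
    have : 1 ≤ J ^ 2 * √J := one_le_mul_of_one_le_of_one_le (one_le_pow₀ hJ1) hs1
    nlinarith [hx.1]
  · refine (m1q_large h).trans (neg_le_neg ?_)
    have hsx : 0 < √x := Real.sqrt_pos.2 hx0
    have h2 : √x ≤ 2 * √J := by
      have : (2 : ℝ) * √J = √(2 ^ 2 * J) := by
        rw [Real.sqrt_mul (by norm_num), Real.sqrt_sq (by norm_num)]
      rw [this]
      exact Real.sqrt_le_sqrt (by linarith [hx.2])
    rw [div_le_div_iff₀ (by positivity) (by positivity)]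
    have h3 : x ≤ 2 * J := by linarith [hx.2]
    have : lam * (100 * (x * √x)) ≤ J * (100 * ((2 * J) * (2 * √J))) := by gcongr
    nlinarith

lemma half_bound (χ : ℝ → ℝ) (hχ : ContDiff ℝ (⊤ : ℕ∞) χ) (hb2 : betaCut χ 2 = 0) (B : ℝ)
    (hB : ∀ s ∈ Set.Icc (1 / 2 : ℝ) 2, |deriv (betaCut χ) s| ≤ B)
    (lam : ℝ) (hl : 0 < lam) (x t : ℝ) (ht : t ≠ 0) :
    ‖∫ ξ in (lam / 2)..(2 * lam), Complex.exp (Complex.I * ((x * ξ + t * m1 ξ : ℝ) : ℂ)) *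
      ((betaCut χ (ξ / lam) : ℝ) : ℂ)‖
      ≤ 15 * B / √(|t| * (lam / (400 * (jap lam ^ 2 * √(jap lam))))) := by
  have hJ1 := jap_ge_one lam
  have hβ : ContDiff ℝ (⊤ : ℕ∞) (betaCut χ) := by
    unfold betaCut
    exact hχ.sub (hχ.comp (contDiff_const.mul contDiff_id))
  have hβd : Differentiable ℝ (betaCut χ) := hβ.differentiable (by simp)
  have hβc : Continuous (deriv (betaCut χ)) := hβ.continuous_deriv (by simp)
  have ht' := abs_pos.2 ht
  have hk : 0 < lam / (400 * (jap lam ^ 2 * √(jap lam))) := by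
    have : 0 < jap lam := by linarith
    have := Real.sqrt_pos.2 this
    positivity
  set k := lam / (400 * (jap lam ^ 2 * √(jap lam))) with hkdef
  have hpos : ∀ ξ ∈ Set.Icc (lam / 2) (2 * lam), 0 < ξ := fun ξ hξ => by linarith [hξ.1]
  have := vdc3 (fun ξ => x * ξ + t * m1 ξ) (fun ξ => x + t * m1p ξ) (fun ξ => t * m1q ξ)
    (fun ξ => betaCut χ (ξ / lam)) (fun ξ => deriv (betaCut χ) (ξ / lam) * (1 / lam))
    (lam / 2) (2 * lam) (|t| * k) (B / lam) (by linarith) (by positivity)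
    (fun ξ hξ => by
      have h := ((hasDerivAt_id ξ).const_mul x).add ((hasDerivAt_m1 (hpos ξ hξ)).const_mul t)
      exact h.congr_deriv (by simp))
    (fun ξ hξ => ((hasDerivAt_m1p (hpos ξ hξ)).const_mul t).const_add x)
    (continuousOn_const.mul (continuousOn_m1q.mono hpos))
    (by
      rcases lt_or_gt_of_ne ht with h | h
      · left
        intro ξ hξ
        have := m1q_bound hl hξ
        rw [abs_of_neg h]
        nlinarith
      · right
        intro ξ hξ
        have := m1q_bound hl hξ
        rw [abs_of_pos h]
        nlinarith)
    (fun ξ hξ => by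
      exact HasDerivAt.comp ξ (hβd (ξ / lam)).hasDerivAt ((hasDerivAt_id ξ).div_const lam))
    (by fun_prop)
    (fun ξ hξ => by
      have hm : ξ / lam ∈ Set.Icc (1 / 2 : ℝ) 2 := by
        constructor
        · rw [le_div_iff₀ hl]; linarith [hξ.1]
        · rw [div_le_iff₀ hl]; linarith [hξ.2]
      rw [abs_mul, abs_of_pos (show 0 < 1 / lam by positivity), mul_one_div]
      exact div_le_div_of_nonneg_right (hB _ hm) hl.le)
    (by
      have : 2 * lam / lam = 2 := by field_simp
      simp only [this, hb2])
  refine this.trans (le_of_eq ?_)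
  field_simp
  ring

lemma oscInt_le_halves (χ : ℝ → ℝ)
    (hsupp : Function.support χ ⊆ Set.Ioo (-2 : ℝ) 2)
    (hone : ∀ s ∈ Set.Icc (-1 : ℝ) 1, χ s = 1) (lam : ℝ) (hl : 0 < lam) (x t K : ℝ) (hK : 0 ≤ K)
    (h : ∀ y s : ℝ, |s| = |t| →
      ‖∫ ξ in (lam / 2)..(2 * lam), Complex.exp (Complex.I * ((y * ξ + s * m1 ξ : ℝ) : ℂ)) *
      ((betaCut χ (ξ / lam) : ℝ) : ℂ)‖ ≤ K) :
    ‖oscInt χ lam x t‖ ≤ 2 * K := by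
  have hz : ∀ ξ ∈ Set.Ioi (0 : ℝ) \ Set.Ioc (lam / 2) (2 * lam), betaCut χ (ξ / lam) = 0 := by
    rintro ξ ⟨h0, h1⟩
    have h0' : 0 < ξ := h0
    have hs0 : 0 < ξ / lam := by positivity
    rw [Set.mem_Ioc, not_and_or, not_lt, not_le] at h1
    unfold betaCut
    rcases h1 with h1 | h1
    · have : ξ / lam ≤ 1 / 2 := by rw [div_le_iff₀ hl]; linarith
      rw [hone _ ⟨by linarith, by linarith⟩, hone _ ⟨by linarith, by linarith⟩, sub_self]
    · have h2 : 2 ≤ ξ / lam := by rw [le_div_iff₀ hl]; linarith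
      have hv : ∀ s : ℝ, 2 ≤ s → χ s = 0 := by
        intro s hs
        by_contra hne
        have := (hsupp hne).2
        linarith
      rw [hv _ h2, hv _ (by linarith), sub_self]
  have key : ∀ y s : ℝ, |s| = |t| →
      ‖∫ ξ in Set.Ioi (0 : ℝ), Complex.exp (Complex.I * ((y * ξ + s * m1 ξ : ℝ) : ℂ)) *
      ((betaCut χ (|ξ| / lam) : ℝ) : ℂ)‖ ≤ K := by
    intro y s hs
    refine le_trans (le_of_eq ?_) (h y s hs)
    rw [intervalIntegral.integral_of_le (by linarith)]
    congr 1
    rw [setIntegral_congr_fun (g := fun ξ : ℝ =>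
      Complex.exp (Complex.I * ((y * ξ + s * m1 ξ : ℝ) : ℂ)) *
      ((betaCut χ (ξ / lam) : ℝ) : ℂ)) measurableSet_Ioi
      (fun ξ hξ => by simp only [abs_of_pos (show 0 < ξ from hξ)])]
    refine setIntegral_eq_of_subset_of_forall_sdiff_eq_zero measurableSet_Ioi ?_ ?_
    · intro ξ hξ
      exact lt_trans (by positivity) hξ.1
    · intro ξ hξ
      simp only [hz ξ hξ, Complex.ofReal_zero, mul_zero]
  unfold oscInt
  by_cases hInt : Integrable (fun ξ : ℝ =>
      Complex.exp (Complex.I * ((x * ξ + t * m1 ξ : ℝ) : ℂ)) * ((betaCut χ (|ξ| / lam) : ℝ) : ℂ))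
  · rw [← intervalIntegral.integral_Iic_add_Ioi (b := 0) hInt.integrableOn hInt.integrableOn]
    refine (norm_add_le _ _).trans ?_
    have e := integral_comp_neg_Iic 0 (fun ξ : ℝ =>
      Complex.exp (Complex.I * (((-x) * ξ + (-t) * m1 ξ : ℝ) : ℂ)) *
        ((betaCut χ (|ξ| / lam) : ℝ) : ℂ))
    simp only [m1_neg, abs_neg, neg_mul_neg, neg_zero] at e
    rw [e]
    have h1 := key (-x) (-t) (abs_neg t)
    have h2 := key x t rfl
    linarith
  · rw [integral_undef hInt, norm_zero]
    positivity

/-- There is a constant `C`, depending only on the cutoff `β` (i.e. on `χ`),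
such that for all `λ > 0`, all `x ∈ ℝ` and all `t ≠ 0`,
`|I_{λ,1}(x,t)| ≤ C |t|^{-1/2} λ^{-1/2} ⟨λ⟩^{5/4}`. -/
theorem oscInt_decay (χ : ℝ → ℝ) (hχ : ContDiff ℝ (⊤ : ℕ∞) χ)
    (hsupp : Function.support χ ⊆ Set.Ioo (-2 : ℝ) 2)
    (hone : ∀ s ∈ Set.Icc (-1 : ℝ) 1, χ s = 1) :
    ∃ C : ℝ, 0 < C ∧
      ∀ lam : ℝ, 0 < lam → ∀ x t : ℝ, t ≠ 0 →
        ‖oscInt χ lam x t‖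
          ≤ C * |t| ^ (-(1 : ℝ) / 2) * lam ^ (-(1 : ℝ) / 2) * jap lam ^ ((5 : ℝ) / 4) := by
  have hv : ∀ s : ℝ, 2 ≤ s → χ s = 0 := by
    intro s hs
    by_contra hne
    have := (hsupp hne).2
    linarith
  have hb2 : betaCut χ 2 = 0 := by
    rw [betaCut, hv 2 le_rfl, hv (2 * 2) (by norm_num), sub_self]
  have hβ : ContDiff ℝ (⊤ : ℕ∞) (betaCut χ) := by
    unfold betaCut
    exact hχ.sub (hχ.comp (contDiff_const.mul contDiff_id))
  have hβc : Continuous (deriv (betaCut χ)) := hβ.continuous_deriv (by simp)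
  obtain ⟨B, hB⟩ := (isCompact_Icc (a := (1 / 2 : ℝ)) (b := 2)).exists_bound_of_continuousOn
    hβc.continuousOn
  have hB0 : 0 ≤ B := (norm_nonneg _).trans (hB 1 ⟨by norm_num, by norm_num⟩)
  refine ⟨600 * (B + 1), by linarith, ?_⟩
  intro lam hl x t ht
  have hJ1 := jap_ge_one lam
  have hJ0 : 0 < jap lam := by linarith
  have main := oscInt_le_halves χ hsupp hone lam hl x t
    (15 * (B + 1) / √(|t| * (lam / (400 * (jap lam ^ 2 * √(jap lam)))))) (by positivity)
    (fun y s hs => by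
      have hs0 : s ≠ 0 := by
        intro h0
        rw [h0, abs_zero] at hs
        exact ht (abs_eq_zero.1 hs.symm)
      have := half_bound χ hχ hb2 (B + 1)
        (fun s hs => by have := hB s hs; rw [Real.norm_eq_abs] at this; linarith) lam hl y s hs0
      rwa [hs] at this)
  refine main.trans (le_of_eq ?_)
  have ht' := abs_pos.2 ht
  set G := jap lam ^ ((5 : ℝ) / 4) with hG
  have hG0 : 0 < G := Real.rpow_pos_of_pos hJ0 _
  have hGG : jap lam ^ 2 * √(jap lam) = G ^ 2 := by
    rw [hG, Real.sqrt_eq_rpow, ← Real.rpow_natCast, ← Real.rpow_natCast, ← Real.rpow_mul hJ0.le,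
      ← Real.rpow_add hJ0]
    norm_num
  have hneg : ∀ y : ℝ, 0 < y → y ^ (-(1 : ℝ) / 2) = (√y)⁻¹ := by
    intro y hy
    rw [Real.sqrt_eq_rpow, ← Real.rpow_neg hy.le]
    norm_num
  have h400 : √(400 * G ^ 2) = 20 * G := by
    rw [show 400 * G ^ 2 = (20 * G) ^ 2 by ring, Real.sqrt_sq (by positivity)]
  rw [hneg _ ht', hneg _ hl, hGG, Real.sqrt_mul ht'.le, Real.sqrt_div hl.le, h400]
  have a1 := (Real.sqrt_pos.2 ht').ne'
  have a2 := (Real.sqrt_pos.2 hl).ne'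
  field_simp
  ring
end
end
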